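/- arXiv:2103.10884 — 2 statements merged into one kernel-verified Lean document; each statement's English description precedes it below -/
import Mathlib

section
/- Let A be a symmetric positive definite n×n real matrix and, for i = 0, …, I, let R_iᵀ be n×n_i real matrices of rank n_i such that the images of the R_iᵀ together span ℝⁿ. Then the additive Schwarz operator M⁻¹ := Σ_{i=0}^{I} R_iᵀ (R_i A R_iᵀ)⁻¹ R_i is a symmetric positive definite n×n matrix. -/
/-!
Each local matrix `Rᵢ A Rᵢᵀ` is positive definite because `Rᵢᵀ` is injective, hence so is its
inverse `Bᵢ`. The quadratic form of `∑ᵢ Rᵢᵀ Bᵢ Rᵢ` at `x` is `∑ᵢ ⟨Rᵢ x, Bᵢ Rᵢ x⟩`, a sum of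
nonnegative terms whose `i`-th term is positive as soon as `Rᵢ x ≠ 0`. If every `Rᵢ x` vanished,
`x` would be orthogonal to the image of every `Rᵢᵀ`, hence to all of `ℝⁿ`, forcing `x = 0`.
-/

open Matrix

/-- If the images of the transposes `Rᵢᵀ` span the whole space, the kernels of the `Rᵢ` have
trivial intersection: their intersection is the orthogonal complement of that span. -/
theorem exists_mulVec_ne_zero_of_iSup_range_eq_top {ι n : Type*} [Fintype n] {m : ι → Type*}
    [∀ i, Fintype (m i)] (R : ∀ i, Matrix (m i) n ℝ)
    (hspan : (⨆ i, LinearMap.range ((R i)ᵀ.mulVecLin)) = ⊤) {x : n → ℝ} (hx : x ≠ 0) :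
    ∃ i, R i *ᵥ x ≠ 0 := by
  by_contra! h
  have hle : (⨆ i, LinearMap.range ((R i)ᵀ.mulVecLin)) ≤
      LinearMap.ker (dotProductBilin ℝ ℝ x) := by
    refine iSup_le fun i => ?_
    rintro _ ⟨y, rfl⟩
    change x ⬝ᵥ ((R i)ᵀ *ᵥ y) = 0
    rw [dotProduct_mulVec, vecMul_transpose, h i, zero_dotProduct]
  have hxx : x ⬝ᵥ x = 0 := (hspan ▸ hle) (Submodule.mem_top (x := x))
  exact hx (dotProduct_self_eq_zero.mp hxx)

/-- The additive Schwarz operator `M⁻¹ = Σᵢ Rᵢᵀ (Rᵢ A Rᵢᵀ)⁻¹ Rᵢ` built from a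
symmetric positive definite matrix `A` and full-rank restriction matrices
`Rᵢᵀ` whose images together span `ℝⁿ` is symmetric positive definite. -/
theorem additive_schwarz_posDef {n I : ℕ} (A : Matrix (Fin n) (Fin n) ℝ)
    (hA : A.PosDef) (ni : Fin (I + 1) → ℕ)
    (R : ∀ i : Fin (I + 1), Matrix (Fin (ni i)) (Fin n) ℝ)
    (hR : ∀ i, Function.Injective ((R i)ᵀ.mulVec))
    (hspan : (⨆ i : Fin (I + 1), LinearMap.range ((R i)ᵀ.mulVecLin)) = ⊤) :
    (∑ i : Fin (I + 1), (R i)ᵀ * (R i * A * (R i)ᵀ)⁻¹ * R i).PosDef := by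
  have hB : ∀ i, ((R i * A * (R i)ᵀ)⁻¹).PosDef := fun i =>
    (hA.mul_mul_conjTranspose_same (B := R i) (by
      intro x y hxy
      apply hR i
      simpa only [vecMul_transpose, mulVec_transpose] using hxy)).inv
  refine PosDef.of_dotProduct_mulVec_pos ?_ fun x hx => ?_
  · exact (posSemidef_sum Finset.univ fun i _ =>
      (hB i).posSemidef.conjTranspose_mul_mul_same (R i)).isHermitian
  have hform : ∀ i, x ⬝ᵥ (((R i)ᵀ * (R i * A * (R i)ᵀ)⁻¹ * R i) *ᵥ x) =
      (R i *ᵥ x) ⬝ᵥ ((R i * A * (R i)ᵀ)⁻¹ *ᵥ (R i *ᵥ x)) := fun i => by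
    rw [← mulVec_mulVec, ← mulVec_mulVec, dotProduct_mulVec x, vecMul_transpose]
  obtain ⟨j, hj⟩ := exists_mulVec_ne_zero_of_iSup_range_eq_top R hspan hx
  rw [star_trivial, sum_mulVec, dotProduct_sum]
  simp only [hform]
  refine Finset.sum_pos' (fun i _ => ?_) ⟨j, Finset.mem_univ j, ?_⟩
  · exact (hB i).posSemidef.dotProduct_mulVec_nonneg (R i *ᵥ x)
  · exact (hB j).dotProduct_mulVec_pos hj
end

section
/- Let A be a symmetric positive definite n×n real matrix and, for i = 0, …, I, let R_iᵀ be n×n_i real matrices of rank n_i whose images together span ℝⁿ. Let f ∈ ℝⁿ, x = A⁻¹ f, S ⊆ ℝⁿ a linear subspace, x̃ ∈ S the Galerkin projection of x onto S, and r := f − A x̃. If r ≠ 0, then there exists an index i ∈ {0, …, I} such that the local Schwarz correction R_iᵀ (R_i A R_iᵀ)⁻¹ R_i r does not lie in S. -/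
open Matrix

/-!
Galerkin orthogonality says that the residual `r` is orthogonal to `S`. If every local correction
`Rᵢᵀ Aᵢ⁻¹ Rᵢ r` were in `S`, pairing it with `r` would give `⟨Rᵢ r, Aᵢ⁻¹ Rᵢ r⟩ = 0`; since
`Aᵢ = Rᵢ A Rᵢᵀ` inherits positive definiteness from `A` (`Rᵢᵀ` being injective), so does `Aᵢ⁻¹`,
and hence `Rᵢ r = 0`. Thus `r` is orthogonal to the range of every `Rᵢᵀ`. These ranges span the
whole space, so `r` is orthogonal to itself and vanishes.
-/

/-- If the residual `r = f − A xTil` of the Galerkin projection `xTil ∈ S` of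
`x = A⁻¹ f` is nonzero, then at least one local Schwarz correction
`Rᵢᵀ (Rᵢ A Rᵢᵀ)⁻¹ Rᵢ r` does not lie in `S`. -/
theorem local_schwarz_correction_not_mem {n I : ℕ} (A : Matrix (Fin n) (Fin n) ℝ)
    (hA : A.PosDef) (ni : Fin (I + 1) → ℕ)
    (R : ∀ i : Fin (I + 1), Matrix (Fin (ni i)) (Fin n) ℝ)
    (hR : ∀ i, Function.Injective ((R i)ᵀ.mulVec))
    (hspan : (⨆ i : Fin (I + 1), LinearMap.range ((R i)ᵀ.mulVecLin)) = ⊤)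
    (f x xTil r : Fin n → ℝ) (S : Submodule ℝ (Fin n → ℝ))
    (hx : x = A⁻¹ *ᵥ f)
    (hmem : xTil ∈ S) (hgal : ∀ s ∈ S, (A *ᵥ xTil) ⬝ᵥ s = f ⬝ᵥ s)
    (hr : r = f - A *ᵥ xTil) (hr0 : r ≠ 0) :
    ∃ i : Fin (I + 1), (R i)ᵀ *ᵥ ((R i * A * (R i)ᵀ)⁻¹ *ᵥ (R i *ᵥ r)) ∉ S := by
  by_contra! hall
  have horth : ∀ s ∈ S, r ⬝ᵥ s = 0 := fun s hs => by
    rw [hr, sub_dotProduct, hgal s hs, sub_self]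
  have hadj : ∀ i y, r ⬝ᵥ ((R i)ᵀ *ᵥ y) = (R i *ᵥ r) ⬝ᵥ y := fun i y => by
    rw [dotProduct_mulVec, vecMul_transpose]
  have hRr : ∀ i, R i *ᵥ r = 0 := fun i => by
    have hpd : (R i * A * (R i)ᵀ).PosDef := by
      have h := hA.conjTranspose_mul_mul_same (B := (R i)ᵀ) (hR i)
      simpa [conjTranspose_eq_transpose_of_trivial] using h
    by_contra hne
    have hpos := hpd.inv.dotProduct_mulVec_pos hne
    have hzero := horth _ (hall i)
    rw [hadj] at hzero
    rw [star_trivial, hzero] at hpos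
    exact lt_irrefl 0 hpos
  let K : Submodule ℝ (Fin n → ℝ) := LinearMap.ker (dotProductBilin ℝ ℝ r)
  have hK : (⨆ i : Fin (I + 1), LinearMap.range ((R i)ᵀ.mulVecLin)) ≤ K := by
    refine iSup_le fun i => ?_
    rintro _ ⟨y, rfl⟩
    change r ⬝ᵥ ((R i)ᵀ *ᵥ y) = 0
    rw [hadj, hRr, zero_dotProduct]
  rw [hspan] at hK
  have hself : r ⬝ᵥ r = 0 := hK (Submodule.mem_top (x := r))
  exact hr0 (dotProduct_self_eq_zero.mp hself)
end
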